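/- arXiv:2505.19371 — 3 statements merged into one kernel-verified Lean document; each statement's English description precedes it below -/
import Mathlib

section
/- Let V ≥ 1, let p ∈ Δ_V have entries sorted in non-increasing order, and let φ : [0,1] → ℝ be dual valid, continuously differentiable on [0,1] with φ'(0) = 0, nondecreasing on [0,1], and such that the elasticity u(x) = x·φ''(x)/φ'(x) is nondecreasing on (0,1]. For a subset Q = {i₁,…,i_k} ⊆ {1,…,V} of size k, define the dual support loss L*(Q) = min_{q ∈ Δ_k} [ Σ_{j=1}^k d_φ(p_{i_j}, q_j) + Σ_{i ∉ Q} d_φ(p_i, 0) ]. Then for every subset S' ⊆ {1,…,V} of size k, L*(S') ≥ L*({1,…,k}). -/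
/-!
The terms `φ' 0 * x` and `φ' y * x` are the only ones in which `d_φ(x, 0)` and `d_φ(x, y)` depend
differently on `x`. Hence replacing the weight `0` at a coordinate with value `x` by the weight `y`
changes the loss by a quantity that decreases in `x` as soon as `φ' 0 ≤ φ' y`. Weights on a support
`S` may therefore be carried over to a support `T` of the same size and with larger entries by any
permutation that maps `S` onto `T` and fixes `S ∩ T`: every value of the objective on `S` dominates
a value on `T`. Compactness of the cube bounds the objective below, so that the infima compare.

Adding an affine function to `φ` changes neither `d_φ` nor the condition that `φ'` be smallest at
`0`. When `φ' 0 = 0` the condition says that `φ'` is nonnegative, as it is for nondecreasing `φ`.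
-/

open Finset Set Filter

/-- One-dimensional Bregman divergence `d_φ(x,y) = φ(x) − φ(y) − φ'(y)(x−y)`,
with the derivative `φ'` given explicitly. -/
noncomputable def breg (φ φ' : ℝ → ℝ) (x y : ℝ) : ℝ := φ x - φ y - φ' y * (x - y)

/-- The dual support loss `L*(Q)`: the infimum, over probability vectors `q`
supported (and summing to one) on `Q`, of the dual Bregman objective
`Σ_{i∈Q} d_φ(p_i, q_i) + Σ_{i∉Q} d_φ(p_i, 0)`. -/
noncomputable def dualLoss {V : ℕ} (φ φ' : ℝ → ℝ) (p : Fin V → ℝ) (S : Finset (Fin V)) : ℝ :=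
  sInf {r : ℝ | ∃ q : Fin V → ℝ, (∀ i, q i ∈ Set.Icc (0:ℝ) 1) ∧ ((∑ i ∈ S, q i) = 1) ∧
    r = (∑ i ∈ S, breg φ φ' (p i) (q i)) + ∑ i ∈ Sᶜ, breg φ φ' (p i) 0}

lemma exists_perm_map_eq_fixing_inter {ι : Type*} [Finite ι] {S T : Finset ι} (h : #S = #T) :
    ∃ σ : Equiv.Perm ι, S.map σ.toEmbedding = T ∧ ∀ i ∈ S, i ∈ T → σ i = i := by
  classical
  cases nonempty_fintype ι
  obtain ⟨e, he⟩ := Set.MapsTo.exists_equiv_extend_of_card_eq (t := T)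
    (s := {i : S | (i : ι) ∈ T}) (f := Subtype.val) (by simpa using h)
    (fun _ hi => hi) Subtype.val_injective.injOn
  refine ⟨e.extendSubtype, ?_, fun i hiS hiT => ?_⟩
  · refine Finset.eq_of_subset_of_card_le (fun j hj => ?_) (by rw [Finset.card_map, h])
    obtain ⟨i, hi, rfl⟩ := Finset.mem_map.1 hj
    exact e.extendSubtype_mem i hi
  · rw [e.extendSubtype_apply_of_mem i hiS]
    exact he ⟨i, hiS⟩ hiT

section Divergence

variable {φ φ' : ℝ → ℝ}

lemma antitone_breg_sub_breg {y z : ℝ} (h : φ' z ≤ φ' y) :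
    Antitone fun x => breg φ φ' x y - breg φ φ' x z := by
  intro a b hab
  have := mul_le_mul_of_nonneg_left hab (sub_nonneg.2 h)
  simp only [breg]
  linarith

lemma continuousOn_breg_right {s : Set ℝ} (hφ : ContinuousOn φ s) (hφ' : ContinuousOn φ' s)
    (x : ℝ) : ContinuousOn (breg φ φ' x) s :=
  (continuousOn_const.sub hφ).sub (hφ'.mul (continuousOn_const.sub continuousOn_id))

end Divergence

/-- The probability vectors on the support `S`, as vectors indexed by all of `ι`: their entries
outside `S` are arbitrary elements of `[0, 1]`, as in `dualLoss`. -/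
def supportWeights {ι : Type*} (S : Finset ι) : Set (ι → ℝ) :=
  {q | (∀ i, q i ∈ Set.Icc (0 : ℝ) 1) ∧ ∑ i ∈ S, q i = 1}

/-- The dual Bregman objective of the weights `q` on the support `S`, whose infimum over
`supportWeights S` is `dualLoss`. Only the values of `q` on `S` matter. -/
noncomputable def dualObjective {ι : Type*} [Fintype ι] [DecidableEq ι] (φ φ' : ℝ → ℝ)
    (p : ι → ℝ) (S : Finset ι) (q : ι → ℝ) : ℝ :=
  ∑ i ∈ S, breg φ φ' (p i) (q i) + ∑ i ∈ Sᶜ, breg φ φ' (p i) 0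

section Objective

variable {ι : Type*} {S : Finset ι} {φ φ' : ℝ → ℝ}

lemma supportWeights_nonempty (hS : S.Nonempty) : (supportWeights S).Nonempty := by
  classical
  obtain ⟨a, ha⟩ := hS
  refine ⟨Pi.single a 1, fun i => ?_, by simp [ha]⟩
  rcases eq_or_ne i a with rfl | hia <;> simp [*]

lemma comp_symm_mem_supportWeights {q : ι → ℝ} (hq : q ∈ supportWeights S) (σ : Equiv.Perm ι) :
    q ∘ σ.symm ∈ supportWeights (S.map σ.toEmbedding) :=
  ⟨fun i => hq.1 (σ.symm i), by simpa using hq.2⟩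

variable [Fintype ι] [DecidableEq ι] {p : ι → ℝ}

lemma dualObjective_eq_sum_add_sum_sub (φ φ' : ℝ → ℝ) (p : ι → ℝ) (S : Finset ι) (q : ι → ℝ) :
    dualObjective φ φ' p S q = ∑ i, breg φ φ' (p i) 0 +
      ∑ i ∈ S, (breg φ φ' (p i) (q i) - breg φ φ' (p i) 0) := by
  rw [dualObjective, ← Finset.sum_add_sum_compl S, Finset.sum_sub_distrib]
  ring

lemma dualObjective_map_le {q : ι → ℝ} {σ : Equiv.Perm ι} (hq : ∀ i ∈ S, φ' 0 ≤ φ' (q i))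
    (hσ : ∀ i ∈ S, p i ≤ p (σ i)) :
    dualObjective φ φ' p (S.map σ.toEmbedding) (q ∘ σ.symm) ≤ dualObjective φ φ' p S q := by
  simp only [dualObjective_eq_sum_add_sum_sub, Finset.sum_map, Equiv.coe_toEmbedding,
    Function.comp_apply, Equiv.symm_apply_apply]
  refine add_le_add le_rfl (Finset.sum_le_sum fun i hi => ?_)
  exact antitone_breg_sub_breg (hq i hi) (hσ i hi)

lemma bddBelow_dualObjective_image (hφ : ContinuousOn φ (Set.Icc 0 1))
    (hφ' : ContinuousOn φ' (Set.Icc 0 1)) (p : ι → ℝ) (S : Finset ι) :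
    BddBelow (dualObjective φ φ' p S '' supportWeights S) := by
  have hcont : ContinuousOn (dualObjective φ φ' p S)
      (Set.univ.pi fun _ => Set.Icc (0 : ℝ) 1) := by
    refine (continuousOn_finsetSum _ fun i _ => ?_).add continuousOn_const
    exact (continuousOn_breg_right hφ hφ' (p i)).comp (continuous_apply i).continuousOn
      fun q hq => hq i trivial
  refine ((isCompact_univ_pi fun _ => isCompact_Icc).bddBelow_image hcont).mono ?_
  exact Set.image_mono fun q hq i _ => hq.1 i

end Objective

section Loss

variable {V : ℕ} {φ φ' : ℝ → ℝ} {p : Fin V → ℝ} {S : Finset (Fin V)}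

lemma dualLoss_eq_sInf_image (φ φ' : ℝ → ℝ) (p : Fin V → ℝ) (S : Finset (Fin V)) :
    dualLoss φ φ' p S = sInf (dualObjective φ φ' p S '' supportWeights S) := by
  refine congrArg sInf (Set.ext fun r => exists_congr fun q => ?_)
  rw [← and_assoc, eq_comm (a := r)]
  rfl

lemma dualLoss_map_le (hφ : ContinuousOn φ (Set.Icc 0 1)) (hφ' : ContinuousOn φ' (Set.Icc 0 1))
    (hmin : IsMinOn φ' (Set.Icc 0 1) 0) (hS : S.Nonempty) {σ : Equiv.Perm (Fin V)}
    (hσ : ∀ i ∈ S, p i ≤ p (σ i)) :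
    dualLoss φ φ' p (S.map σ.toEmbedding) ≤ dualLoss φ φ' p S := by
  rw [dualLoss_eq_sInf_image, dualLoss_eq_sInf_image]
  refine le_csInf ((supportWeights_nonempty hS).image _) ?_
  rintro _ ⟨q, hq, rfl⟩
  calc
    sInf (dualObjective φ φ' p (S.map σ.toEmbedding) '' supportWeights (S.map σ.toEmbedding))
      ≤ dualObjective φ φ' p (S.map σ.toEmbedding) (q ∘ σ.symm) :=
        csInf_le (bddBelow_dualObjective_image hφ hφ' p _)
          (Set.mem_image_of_mem _ (comp_symm_mem_supportWeights hq σ))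
    _ ≤ dualObjective φ φ' p S q := dualObjective_map_le (fun i _ => hmin (hq.1 i)) hσ

end Loss

lemma isMinOn_deriv_of_monotoneOn_of_eq_zero {f f' : ℝ → ℝ} {s : Set ℝ} {a : ℝ}
    (hs : UniqueDiffOn ℝ s) (hf : ∀ x ∈ s, HasDerivWithinAt f (f' x) s x) (hmono : MonotoneOn f s)
    (ha : f' a = 0) : IsMinOn f' s a :=
  fun x hx => ha.le.trans ((hf x hx).nonneg_of_monotoneOn (hs x hx).accPt hmono)

lemma card_filter_val_lt_card {V : ℕ} (S : Finset (Fin V)) :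
    #{i : Fin V | (i : ℕ) < #S} = #S := by
  rw [Fin.card_filter_val_lt, min_eq_right (card_finset_fin_le S)]

theorem dual_bregman_decoding_is_greedy_elasticity_general {V : ℕ} {φ φ' : ℝ → ℝ}
    {p : Fin V → ℝ} {S T : Finset (Fin V)}
    (hφ : ∀ t ∈ Set.Icc (0 : ℝ) 1, HasDerivWithinAt φ (φ' t) (Set.Icc 0 1) t)
    (hφ' : ContinuousOn φ' (Set.Icc 0 1)) (hmin : IsMinOn φ' (Set.Icc 0 1) 0)
    (hS : S.Nonempty) (hcard : #S = #T) (htop : ∀ i ∈ T, ∀ j ∉ T, p j ≤ p i) :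
    dualLoss φ φ' p T ≤ dualLoss φ φ' p S := by
  obtain ⟨σ, rfl, hfix⟩ := exists_perm_map_eq_fixing_inter hcard
  refine dualLoss_map_le (HasDerivWithinAt.continuousOn hφ) hφ' hmin hS fun i hi => ?_
  by_cases hiT : i ∈ S.map σ.toEmbedding
  · rw [hfix i hi hiT]
  · exact htop (σ i) (Finset.mem_map_of_mem _ hi) i hiT

/-- Dual Bregman decoding is greedy under the elasticity condition.
Here `φ` is dual valid, continuously differentiable on `[0,1]` with `φ'(0) = 0`,
nondecreasing on `[0,1]`, and the elasticity `u(x) = x·φ''(x)/φ'(x)` is nondecreasing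
on `(0,1]`. Then the top-`k` support minimizes the dual support loss. -/
theorem dual_bregman_decoding_is_greedy_elasticity
    (V k : ℕ) (hV : 1 ≤ V) (hk : 1 ≤ k)
    (p : Fin V → ℝ) (hp0 : ∀ i, p i ∈ Set.Icc (0:ℝ) 1) (hp1 : (∑ i, p i) = 1)
    (hsorted : ∀ i j : Fin V, i ≤ j → p j ≤ p i)
    (φ φ' φ'' φ''' : ℝ → ℝ)
    (hd1 : ∀ t ∈ Set.Ioc (0:ℝ) 1, HasDerivWithinAt φ (φ' t) (Set.Ioc 0 1) t)
    (hd2 : ∀ t ∈ Set.Ioc (0:ℝ) 1, HasDerivWithinAt φ' (φ'' t) (Set.Ioc 0 1) t)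
    (hd3 : ∀ t ∈ Set.Ioc (0:ℝ) 1, HasDerivWithinAt φ'' (φ''' t) (Set.Ioc 0 1) t)
    (hlim : Filter.Tendsto (fun t => t * φ'' t) (nhdsWithin 0 (Set.Ioi 0)) (nhds 0))
    (hsc1 : ∀ t ∈ Set.Ioc (0:ℝ) 1, StrictConvexOn ℝ (Set.Icc t 1) (fun y => breg φ φ' t y))
    (hsc2 : StrictConvexOn ℝ (Set.Ioc 0 1) (fun y => breg φ φ' 0 y))
    (hC1 : ∀ t ∈ Set.Icc (0:ℝ) 1, HasDerivWithinAt φ (φ' t) (Set.Icc 0 1) t)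
    (hC1cont : ContinuousOn φ' (Set.Icc 0 1))
    (hφ'0 : φ' 0 = 0)
    (hφmono : MonotoneOn φ (Set.Icc 0 1))
    (helas : MonotoneOn (fun t => t * φ'' t / φ' t) (Set.Ioc 0 1))
    (S' : Finset (Fin V)) (hcard : S'.card = k) :
    dualLoss φ φ' p (Finset.univ.filter (fun i => (i : ℕ) < k)) ≤ dualLoss φ φ' p S' := by
  subst hcard
  exact dual_bregman_decoding_is_greedy_elasticity_general hC1 hC1cont
    (isMinOn_deriv_of_monotoneOn_of_eq_zero (uniqueDiffOn_Icc zero_lt_one) hC1 hφmono hφ'0)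
    (Finset.card_pos.1 hk) (card_filter_val_lt_card S').symm
    fun i hi j hj => hsorted i j (by grind)
end

section
/- Let φ : [0,1] → ℝ be dual valid and continuously differentiable on [0,1], let k ≥ 1, and let x ∈ [0,1]^k satisfy 0 < Σᵢ xᵢ < 1. Then the dual Bregman projection problem min_{q ∈ Δ_k} Σᵢ d_φ(xᵢ, qᵢ) has a unique minimizer q*; moreover every coordinate satisfies q*ᵢ ∈ (xᵢ, 1], and there exists a single Lagrange multiplier ν* > 0 such that φ''(q*ᵢ)·(q*ᵢ − xᵢ) = ν* for every i ∈ {1,…,k}. -/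
/-!
The derivative of `y ↦ d_φ(t, y)` is `φ''(y)(y - t)`, and it vanishes at `y = t` as soon as `φ` is
`C¹`, even at `t = 0`, where `φ''` may not exist. Comparing this zero with the derivative further
right, strict convexity of `d_φ(t, ·)` on `[t, 1]` forces `φ'' > 0` on `(0, 1]`. Hence `d_φ(t, ·)`
strictly decreases on `[0, t]` and strictly increases on `[t, 1]`.

A minimizer `q` exists by compactness. It satisfies `x ≤ q`, since otherwise
`x + c (q - x)⁺`, with `c ∈ (0, 1)` normalizing the total mass, would be a better point. Therefore
the objective is differentiable at `q`, despite the possibly infinite slopes of `d_φ(t, ·)` at `0`,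
and the first-order condition on the simplex gives a multiplier `ν` with
`ν ≤ φ''(qᵢ)(qᵢ - xᵢ)` for all `i`, and equality when `qᵢ > 0`. As some `qⱼ > xⱼ`, we get `ν > 0`,
so no `qᵢ` equals `xᵢ`, and equality holds throughout. All minimizers thus lie in the product of
the intervals `(xᵢ, 1]`, where the objective is strictly convex.
-/

open Finset Set Filter

/-- The probability simplex `Δ_k = {q ∈ [0,1]^k : Σ qᵢ = 1}`. -/
def probSimplex (k : ℕ) : Set (Fin k → ℝ) :=
  {q | (∀ i, q i ∈ Set.Icc (0:ℝ) 1) ∧ (∑ i, q i) = 1}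

lemma probSimplex_eq_stdSimplex (k : ℕ) : probSimplex k = stdSimplex ℝ (Fin k) := by
  ext q
  exact ⟨fun hq => ⟨fun i => (hq.1 i).1, hq.2⟩, fun hq => ⟨mem_Icc_of_mem_stdSimplex hq, hq.2⟩⟩

section SeparableObjective

variable {ι : Type*} [Fintype ι] {F : ι → ℝ → ℝ} {a x q r : ι → ℝ}

lemma strictConvexOn_sum_apply {s : ι → Set ℝ} (hF : ∀ i, StrictConvexOn ℝ (s i) (F i)) :
    StrictConvexOn ℝ (Set.univ.pi s) fun q => ∑ i, F i (q i) := by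
  refine ⟨convex_pi fun i _ => (hF i).1, fun q hq r hr hqr α β hα hβ hαβ => ?_⟩
  obtain ⟨j, hj⟩ := Function.ne_iff.1 hqr
  rw [Set.mem_univ_pi] at hq hr
  calc ∑ i, F i ((α • q + β • r) i)
      < ∑ i, (α • F i (q i) + β • F i (r i)) :=
        Finset.sum_lt_sum
          (fun i _ => (hF i).convexOn.2 (hq i) (hr i) hα.le hβ.le hαβ)
          ⟨j, Finset.mem_univ j, (hF j).2 (hq j) (hr j) hj hα hβ hαβ⟩
    _ = α • ∑ i, F i (q i) + β • ∑ i, F i (r i) := by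
        rw [Finset.sum_add_distrib, Finset.smul_sum, Finset.smul_sum]

lemma eq_of_isMinOn_sum {K : Set (ι → ℝ)} {s : ι → Set ℝ} (hK : Convex ℝ K)
    (hF : ∀ i, StrictConvexOn ℝ (s i) (F i)) (hq : q ∈ K ∩ Set.univ.pi s)
    (hr : r ∈ K ∩ Set.univ.pi s) (hqmin : IsMinOn (fun r => ∑ i, F i (r i)) K q)
    (hrmin : IsMinOn (fun r => ∑ i, F i (r i)) K r) : q = r :=
  ((strictConvexOn_sum_apply hF).subset Set.inter_subset_right
    (hK.inter (convex_pi fun i _ => (hF i).1))).eq_of_isMinOn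
    (hqmin.on_subset Set.inter_subset_left) (hrmin.on_subset Set.inter_subset_left) hq hr

lemma sum_mul_sub_nonneg_of_isMinOn {K : Set (ι → ℝ)} {s : ι → Set ℝ} (hK : Convex ℝ K)
    (hKs : K ⊆ Set.univ.pi s) (hq : q ∈ K) (hr : r ∈ K)
    (hmin : IsMinOn (fun r => ∑ i, F i (r i)) K q)
    (hF : ∀ i, HasDerivWithinAt (F i) (a i) (s i) (q i)) :
    0 ≤ ∑ i, a i * (r i - q i) := by
  have hderiv : HasFDerivWithinAt (fun r => ∑ i, F i (r i))
      (∑ i, a i • ContinuousLinearMap.proj (R := ℝ) (φ := fun _ : ι => ℝ) i) K q :=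
    HasFDerivWithinAt.fun_sum fun i _ => (hF i).comp_hasFDerivWithinAt q
      (hasFDerivWithinAt_apply i q K) fun p hp => hKs hp i (Set.mem_univ i)
  have htangent : r - q ∈ posTangentConeAt K q :=
    sub_mem_posTangentConeAt_of_segment_subset (hK.segment_subset hq hr)
  simpa using hmin.localize.hasFDerivWithinAt_nonneg hderiv htangent

lemma exists_lagrange_multiplier_of_isMinOn_stdSimplex (hq : q ∈ stdSimplex ℝ ι)
    (hmin : IsMinOn (fun r => ∑ i, F i (r i)) (stdSimplex ℝ ι) q)
    (hF : ∀ i, HasDerivWithinAt (F i) (a i) (Set.Icc 0 1) (q i)) :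
    ∃ ν, ∀ i, ν ≤ a i ∧ (0 < q i → a i = ν) := by
  classical
  have hν : ∀ i, ∑ j, a j * q j ≤ a i := fun i => by
    have h := sum_mul_sub_nonneg_of_isMinOn (convex_stdSimplex ℝ ι)
      (fun p hp j _ => mem_Icc_of_mem_stdSimplex hp j) hq (single_mem_stdSimplex ℝ i) hmin hF
    simpa [mul_sub, Pi.single_apply] using h
  refine ⟨∑ j, a j * q j, fun i => ⟨hν i, fun hi => ?_⟩⟩
  -- The `q`-weighted mean of the nonnegative gaps `a j - ν` is zero, so each weighted gap is zero.
  have hgap : ∑ j, q j * (a j - ∑ l, a l * q l) = 0 := by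
    simp only [mul_sub, Finset.sum_sub_distrib, ← Finset.sum_mul, hq.2, one_mul]
    simp only [mul_comm, sub_self]
  have hgap_i := (Finset.sum_eq_zero_iff_of_nonneg fun j _ =>
    mul_nonneg (hq.1 j) (sub_nonneg.2 (hν j))).1 hgap i (Finset.mem_univ i)
  exact sub_eq_zero.1 ((mul_eq_zero.1 hgap_i).resolve_left hi.ne')

lemma le_of_isMinOn_sum_stdSimplex (hx : ∀ i, 0 ≤ x i) (hsum : ∑ i, x i ≤ 1)
    (hanti : ∀ i, StrictAntiOn (F i) (Set.Icc 0 (x i)))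
    (hmono : ∀ i, MonotoneOn (F i) (Set.Icc (x i) 1)) (hq : q ∈ stdSimplex ℝ ι)
    (hmin : IsMinOn (fun r => ∑ i, F i (r i)) (stdSimplex ℝ ι) q) (i : ι) : x i ≤ q i := by
  by_contra! hi
  set P := ∑ j, max (q j - x j) 0
  have hP : 1 - ∑ j, x j < P := by
    rw [← hq.2, ← Finset.sum_sub_distrib]
    exact Finset.sum_lt_sum (fun j _ => le_max_left _ _)
      ⟨i, Finset.mem_univ i, lt_max_of_lt_right (sub_neg.2 hi)⟩
  have hP0 : 0 < P := (sub_nonneg.2 hsum).trans_lt hP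
  set c := (1 - ∑ j, x j) / P
  have hc0 : 0 ≤ c := div_nonneg (sub_nonneg.2 hsum) hP0.le
  have hc1 : c ≤ 1 := (div_le_one hP0).2 hP.le
  set r : ι → ℝ := fun j => x j + c * max (q j - x j) 0
  have hr : r ∈ stdSimplex ℝ ι := by
    refine ⟨fun j => add_nonneg (hx j) (mul_nonneg hc0 (le_max_right _ _)), ?_⟩
    rw [Finset.sum_add_distrib, ← Finset.mul_sum, div_mul_cancel₀ _ hP0.ne', add_sub_cancel]
  have hlt_of_lt : ∀ j, q j < x j → F j (r j) < F j (q j) := fun j hj => by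
    have hrj : r j = x j := by simp only [r, max_eq_right (sub_neg.2 hj).le, mul_zero, add_zero]
    rw [hrj]
    exact hanti j ⟨hq.1 j, hj.le⟩ ⟨hx j, le_rfl⟩ hj
  have hle_of_le : ∀ j, x j ≤ q j → F j (r j) ≤ F j (q j) := fun j hj => by
    have hrj : r j = x j + c * (q j - x j) := by simp only [r, max_eq_left (sub_nonneg.2 hj)]
    have hxr : x j ≤ r j := le_add_of_nonneg_right (mul_nonneg hc0 (le_max_right _ _))
    have hrq : r j ≤ q j := by linarith [mul_le_of_le_one_left (sub_nonneg.2 hj) hc1]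
    have hq1 : q j ≤ 1 := (mem_Icc_of_mem_stdSimplex hq j).2
    exact hmono j ⟨hxr, hrq.trans hq1⟩ ⟨hj, hq1⟩ hrq
  have hlt : ∑ j, F j (r j) < ∑ j, F j (q j) := by
    refine Finset.sum_lt_sum (fun j _ => ?_) ⟨i, Finset.mem_univ i, hlt_of_lt i hi⟩
    exact (lt_or_ge (q j) (x j)).elim (fun hj => (hlt_of_lt j hj).le) (hle_of_le j)
  exact hlt.not_ge (hmin hr)

end SeparableObjective

section BregmanDivergence

variable {φ φ' : ℝ → ℝ} {s : Set ℝ} {a t y : ℝ}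

lemma hasDerivWithinAt_breg (hφ : HasDerivWithinAt φ (φ' y) s y)
    (hφ' : HasDerivWithinAt φ' a s y) (t : ℝ) :
    HasDerivWithinAt (breg φ φ' t) (a * (y - t)) s y := by
  have h := (hφ.const_sub (φ t)).sub (hφ'.mul ((hasDerivWithinAt_id y s).const_sub t))
  exact h.congr_deriv (by simp only [id_eq]; ring)

-- No second derivative is needed on the diagonal: the difference quotient of `d_φ(t, ·)` at `t` is
-- `φ'(y)` minus the difference quotient of `φ`.
lemma hasDerivWithinAt_breg_self (hφ : HasDerivWithinAt φ (φ' t) s t)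
    (hφ' : ContinuousWithinAt φ' s t) : HasDerivWithinAt (breg φ φ' t) 0 s t := by
  rw [hasDerivWithinAt_iff_tendsto_slope] at hφ ⊢
  have h := (hφ'.mono Set.sdiff_subset).tendsto.sub hφ
  rw [sub_self] at h
  refine h.congr' ?_
  filter_upwards [self_mem_nhdsWithin] with y hy
  have hyt : y - t ≠ 0 := sub_ne_zero.2 hy.2
  simp only [slope_def_field, breg]
  field_simp
  ring

lemma continuousOn_breg (hφ : ContinuousOn φ s) (hφ' : ContinuousOn φ' s) (t : ℝ) :
    ContinuousOn (breg φ φ' t) s := by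
  unfold breg
  fun_prop

end BregmanDivergence

section Interval

variable {φ φ' φ'' : ℝ → ℝ} {a b t y : ℝ}
  (hφ : ∀ y ∈ Set.Icc a b, HasDerivWithinAt φ (φ' y) (Set.Icc a b) y)
  (hcont : ContinuousOn φ' (Set.Icc a b))
  (hφ' : ∀ y ∈ Set.Ioc a b, HasDerivWithinAt φ' (φ'' y) (Set.Ioc a b) y)

include hφ hφ'

lemma hasDerivWithinAt_breg_Ioc (t : ℝ) (hy : y ∈ Set.Ioc a b) :
    HasDerivWithinAt (breg φ φ' t) (φ'' y * (y - t)) (Set.Ioc a b) y :=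
  hasDerivWithinAt_breg ((hφ y (Set.Ioc_subset_Icc_self hy)).mono Set.Ioc_subset_Icc_self)
    (hφ' y hy) t

include hcont

lemma hasDerivWithinAt_breg_Icc (hat : a ≤ t) (hy : y ∈ Set.Icc t b) :
    HasDerivWithinAt (breg φ φ' t) (φ'' y * (y - t)) (Set.Icc a b) y := by
  have hyab : y ∈ Set.Icc a b := ⟨hat.trans hy.1, hy.2⟩
  rcases hy.1.eq_or_lt with rfl | hty
  · rw [sub_self, mul_zero]
    exact hasDerivWithinAt_breg_self (hφ t hyab) (hcont t hyab)
  · have hay : a < y := hat.trans_lt hty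
    refine (hasDerivWithinAt_breg_Ioc hφ hφ' t ⟨hay, hy.2⟩).mono_of_mem_nhdsWithin ?_
    filter_upwards [self_mem_nhdsWithin, mem_nhdsWithin_of_mem_nhds (Ioi_mem_nhds hay)]
      with z hz haz
    exact ⟨haz, hz.2⟩

lemma snd_deriv_pos_of_strictConvexOn_breg
    (hsc : ∀ t ∈ Set.Ioc a b, StrictConvexOn ℝ (Set.Icc t b) (breg φ φ' t))
    (hy : y ∈ Set.Ioc a b) : 0 < φ'' y := by
  obtain ⟨t, hat, hty⟩ := exists_between hy.1
  have ht_mem : t ∈ Set.Icc t b := ⟨le_rfl, hty.le.trans hy.2⟩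
  have hy_mem : y ∈ Set.Icc t b := ⟨hty.le, hy.2⟩
  have hsc_t : StrictConvexOn ℝ (Set.Icc t b) (breg φ φ' t) := hsc t ⟨hat, ht_mem.2⟩
  have hderiv : ∀ z ∈ Set.Icc t b,
      HasDerivWithinAt (breg φ φ' t) (φ'' z * (z - t)) (Set.Icc t b) z := fun z hz =>
    (hasDerivWithinAt_breg_Icc hφ hcont hφ' hat.le hz).mono (Set.Icc_subset_Icc_left hat.le)
  have hlt : 0 < φ'' y * (y - t) := calc
    0 = φ'' t * (t - t) := by rw [sub_self, mul_zero]
    _ < slope (breg φ φ' t) t y :=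
        hsc_t.lt_slope_of_hasDerivWithinAt ht_mem hy_mem hty (hderiv t ht_mem)
    _ < φ'' y * (y - t) :=
        hsc_t.slope_lt_of_hasDerivWithinAt ht_mem hy_mem hty (hderiv y hy_mem)
  exact pos_of_mul_pos_left hlt (sub_pos.2 hty).le

variable (hpos : ∀ y ∈ Set.Ioc a b, 0 < φ'' y)
include hpos

lemma strictAntiOn_breg (htb : t ≤ b) : StrictAntiOn (breg φ φ' t) (Set.Icc a t) := by
  have hsub : Set.Ioo a t ⊆ Set.Ioc a b := fun y hy => ⟨hy.1, hy.2.le.trans htb⟩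
  have hcont_breg : ContinuousOn (breg φ φ' t) (Set.Icc a b) :=
    continuousOn_breg (fun y hy => (hφ y hy).continuousWithinAt) hcont t
  refine strictAntiOn_of_hasDerivWithinAt_neg (f' := fun y => φ'' y * (y - t)) (convex_Icc a t)
    (hcont_breg.mono (Set.Icc_subset_Icc_right htb)) ?_ ?_ <;> rw [interior_Icc] <;> intro y hy
  · exact (hasDerivWithinAt_breg_Ioc hφ hφ' t (hsub hy)).mono hsub
  · exact mul_neg_of_pos_of_neg (hpos y (hsub hy)) (sub_neg.2 hy.2)

lemma strictMonoOn_breg (hat : a ≤ t) : StrictMonoOn (breg φ φ' t) (Set.Icc t b) := by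
  have hsub : Set.Ioo t b ⊆ Set.Ioc a b := fun y hy => ⟨hat.trans_lt hy.1, hy.2.le⟩
  have hcont_breg : ContinuousOn (breg φ φ' t) (Set.Icc a b) :=
    continuousOn_breg (fun y hy => (hφ y hy).continuousWithinAt) hcont t
  refine strictMonoOn_of_hasDerivWithinAt_pos (f' := fun y => φ'' y * (y - t)) (convex_Icc t b)
    (hcont_breg.mono (Set.Icc_subset_Icc_left hat)) ?_ ?_ <;> rw [interior_Icc] <;> intro y hy
  · exact (hasDerivWithinAt_breg_Ioc hφ hφ' t (hsub hy)).mono hsub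
  · exact mul_pos (hpos y (hsub hy)) (sub_pos.2 hy.1)

end Interval

section Projection

variable {φ φ' φ'' : ℝ → ℝ} {ι : Type*} [Fintype ι] {x : ι → ℝ}

lemma exists_isMinOn_sum_breg [Nonempty ι] (hφ : ContinuousOn φ (Set.Icc 0 1))
    (hφ' : ContinuousOn φ' (Set.Icc 0 1)) (x : ι → ℝ) :
    ∃ q ∈ stdSimplex ℝ ι, IsMinOn (fun r => ∑ i, breg φ φ' (x i) (r i)) (stdSimplex ℝ ι) q := by
  classical
  refine (isCompact_stdSimplex ℝ ι).exists_isMinOn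
    ⟨_, single_mem_stdSimplex ℝ (Classical.arbitrary ι)⟩ (continuousOn_finsetSum _ fun i _ => ?_)
  exact (continuousOn_breg hφ hφ' (x i)).comp (continuous_apply i).continuousOn
    fun q hq => mem_Icc_of_mem_stdSimplex hq i

lemma exists_pos_multiplier_of_isMinOn_sum_breg {q : ι → ℝ}
    (hφ : ∀ t ∈ Set.Icc (0 : ℝ) 1, HasDerivWithinAt φ (φ' t) (Set.Icc 0 1) t)
    (hcont : ContinuousOn φ' (Set.Icc 0 1))
    (hφ' : ∀ t ∈ Set.Ioc (0 : ℝ) 1, HasDerivWithinAt φ' (φ'' t) (Set.Ioc 0 1) t)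
    (hpos : ∀ t ∈ Set.Ioc (0 : ℝ) 1, 0 < φ'' t)
    (hx : ∀ i, 0 ≤ x i) (hsum : ∑ i, x i < 1) (hq : q ∈ stdSimplex ℝ ι)
    (hmin : IsMinOn (fun r => ∑ i, breg φ φ' (x i) (r i)) (stdSimplex ℝ ι) q) :
    ∃ ν, 0 < ν ∧ ∀ i, x i < q i ∧ φ'' (q i) * (q i - x i) = ν := by
  have hq1 : ∀ i, q i ≤ 1 := fun i => (mem_Icc_of_mem_stdSimplex hq i).2
  have hx1 : ∀ i, x i ≤ 1 := fun i =>
    (Finset.single_le_sum (fun j _ => hx j) (Finset.mem_univ i)).trans hsum.le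
  have hxq : ∀ i, x i ≤ q i := le_of_isMinOn_sum_stdSimplex hx hsum.le
    (fun i => strictAntiOn_breg hφ hcont hφ' hpos (hx1 i))
    (fun i => (strictMonoOn_breg hφ hcont hφ' hpos (hx i)).monotoneOn) hq hmin
  obtain ⟨ν, hν⟩ := exists_lagrange_multiplier_of_isMinOn_stdSimplex hq hmin fun i =>
    hasDerivWithinAt_breg_Icc hφ hcont hφ' (hx i) ⟨hxq i, hq1 i⟩
  obtain ⟨j, -, hj⟩ : ∃ j ∈ Finset.univ, x j < q j :=
    Finset.exists_lt_of_sum_lt (hsum.trans_eq hq.2.symm)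
  have hqj : 0 < q j := (hx j).trans_lt hj
  have hν0 : 0 < ν := by
    rw [← (hν j).2 hqj]
    exact mul_pos (hpos _ ⟨hqj, hq1 j⟩) (sub_pos.2 hj)
  have hlt : ∀ i, x i < q i := fun i => (hxq i).lt_of_ne fun heq => by
    have hνi : ν ≤ φ'' (q i) * (q i - x i) := (hν i).1
    rw [heq, sub_self, mul_zero] at hνi
    exact hνi.not_gt hν0
  exact ⟨ν, hν0, fun i => ⟨hlt i, (hν i).2 ((hx i).trans_lt (hlt i))⟩⟩

theorem dual_bregman_projection_unique_general [Nonempty ι]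
    (hφ : ∀ t ∈ Set.Icc (0 : ℝ) 1, HasDerivWithinAt φ (φ' t) (Set.Icc 0 1) t)
    (hcont : ContinuousOn φ' (Set.Icc 0 1))
    (hφ' : ∀ t ∈ Set.Ioc (0 : ℝ) 1, HasDerivWithinAt φ' (φ'' t) (Set.Ioc 0 1) t)
    (hsc : ∀ t ∈ Set.Ioc (0 : ℝ) 1, StrictConvexOn ℝ (Set.Icc t 1) (breg φ φ' t))
    (hsc0 : StrictConvexOn ℝ (Set.Ioc 0 1) (breg φ φ' 0))
    (hx : ∀ i, 0 ≤ x i) (hsum : ∑ i, x i < 1) :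
    ∃ q ∈ stdSimplex ℝ ι,
      IsMinOn (fun r => ∑ i, breg φ φ' (x i) (r i)) (stdSimplex ℝ ι) q ∧
      (∀ r ∈ stdSimplex ℝ ι,
        IsMinOn (fun r => ∑ i, breg φ φ' (x i) (r i)) (stdSimplex ℝ ι) r → r = q) ∧
      (∀ i, q i ∈ Set.Ioc (x i) 1) ∧
      ∃ ν, 0 < ν ∧ ∀ i, φ'' (q i) * (q i - x i) = ν := by
  have hmult : ∀ r ∈ stdSimplex ℝ ι,
      IsMinOn (fun r => ∑ i, breg φ φ' (x i) (r i)) (stdSimplex ℝ ι) r →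
      ∃ ν, 0 < ν ∧ ∀ i, x i < r i ∧ φ'' (r i) * (r i - x i) = ν := fun r =>
    exists_pos_multiplier_of_isMinOn_sum_breg hφ hcont hφ'
      (fun y hy => snd_deriv_pos_of_strictConvexOn_breg hφ hcont hφ' hsc hy) hx hsum
  have hmem : ∀ r ∈ stdSimplex ℝ ι,
      IsMinOn (fun r => ∑ i, breg φ φ' (x i) (r i)) (stdSimplex ℝ ι) r →
      r ∈ stdSimplex ℝ ι ∩ Set.univ.pi fun i => Set.Ioc (x i) 1 := fun r hr hrmin => by
    obtain ⟨_, _, hr_mult⟩ := hmult r hr hrmin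
    exact ⟨hr, fun i _ => ⟨(hr_mult i).1, (mem_Icc_of_mem_stdSimplex hr i).2⟩⟩
  obtain ⟨q, hq, hmin⟩ :=
    exists_isMinOn_sum_breg (fun t ht => (hφ t ht).continuousWithinAt) hcont x
  obtain ⟨ν, hν0, hν⟩ := hmult q hq hmin
  have hq_mem := hmem q hq hmin
  have hx1 : ∀ i, x i ≤ 1 := fun i => (hν i).1.le.trans (hq_mem.2 i (Set.mem_univ i)).2
  have hsc_coord : ∀ i, StrictConvexOn ℝ (Set.Ioc (x i) 1) (breg φ φ' (x i)) := fun i => by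
    rcases (hx i).eq_or_lt with h0 | h0
    · rwa [← h0]
    · exact (hsc _ ⟨h0, hx1 i⟩).subset Set.Ioc_subset_Icc_self (convex_Ioc _ _)
  exact ⟨q, hq, hmin, fun r hr hrmin =>
      eq_of_isMinOn_sum (convex_stdSimplex ℝ ι) hsc_coord (hmem r hr hrmin) hq_mem hrmin hmin,
    fun i => hq_mem.2 i (Set.mem_univ i), ν, hν0, fun i => (hν i).2⟩

end Projection

/-- Existence, uniqueness, and KKT characterization of the dual Bregman
projection. For a dual valid `φ` that is continuously differentiable on `[0,1]` and
`x ∈ [0,1]^k` with `0 < Σ xᵢ < 1`, the problem `min_{q ∈ Δ_k} Σᵢ d_φ(xᵢ, qᵢ)` has a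
unique minimizer `q*`, each coordinate satisfies `q*ᵢ ∈ (xᵢ, 1]`, and there is a single
Lagrange multiplier `ν* > 0` with `φ''(q*ᵢ)(q*ᵢ − xᵢ) = ν*` for all `i`. -/
theorem dual_bregman_projection_unique
    (k : ℕ) (hk : 1 ≤ k)
    (φ φ' φ'' φ''' : ℝ → ℝ)
    (hd1 : ∀ t ∈ Set.Ioc (0:ℝ) 1, HasDerivWithinAt φ (φ' t) (Set.Ioc 0 1) t)
    (hd2 : ∀ t ∈ Set.Ioc (0:ℝ) 1, HasDerivWithinAt φ' (φ'' t) (Set.Ioc 0 1) t)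
    (hd3 : ∀ t ∈ Set.Ioc (0:ℝ) 1, HasDerivWithinAt φ'' (φ''' t) (Set.Ioc 0 1) t)
    (hlim : Filter.Tendsto (fun t => t * φ'' t) (nhdsWithin 0 (Set.Ioi 0)) (nhds 0))
    (hsc1 : ∀ t ∈ Set.Ioc (0:ℝ) 1, StrictConvexOn ℝ (Set.Icc t 1) (fun y => breg φ φ' t y))
    (hsc2 : StrictConvexOn ℝ (Set.Ioc 0 1) (fun y => breg φ φ' 0 y))
    (hC1 : ∀ t ∈ Set.Icc (0:ℝ) 1, HasDerivWithinAt φ (φ' t) (Set.Icc 0 1) t)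
    (hC1cont : ContinuousOn φ' (Set.Icc 0 1))
    (x : Fin k → ℝ) (hx : ∀ i, x i ∈ Set.Icc (0:ℝ) 1)
    (hsum0 : 0 < ∑ i, x i) (hsum1 : (∑ i, x i) < 1) :
    ∃ q ∈ probSimplex k,
      (∀ r ∈ probSimplex k,
        (∑ i, breg φ φ' (x i) (q i)) ≤ ∑ i, breg φ φ' (x i) (r i)) ∧
      (∀ r ∈ probSimplex k,
        (∀ s ∈ probSimplex k,
          (∑ i, breg φ φ' (x i) (r i)) ≤ ∑ i, breg φ φ' (x i) (s i)) → r = q) ∧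
      (∀ i, q i ∈ Set.Ioc (x i) 1) ∧
      ∃ ν : ℝ, 0 < ν ∧ ∀ i, φ'' (q i) * (q i - x i) = ν := by
  have : NeZero k := ⟨by lia⟩
  simpa only [probSimplex_eq_stdSimplex, isMinOn_iff] using
    dual_bregman_projection_unique_general hC1 hC1cont hd2 hsc1 hsc2 (fun i => (hx i).1) hsum1
end

section
/- Let φ be primal valid with derivative f = φ', and define the restricted convex conjugate φ*(t) = sup_{y ∈ [0,1]} ( t·y − φ(y) ). Let V ≥ 1, let p ∈ Δ_V, fix k ∈ {1,…,V}, and suppose there exist ν_k ∈ ℝ and q ∈ Δ_k such that f(q_j) = f(p_j) + ν_k for every j ∈ {1,…,k}. Then the regularization-free primal cost of keeping the first k coordinates satisfies the exact dual representation: Σ_{j=1}^k d_φ(q_j, p_j) + Σ_{j=k+1}^V d_φ(0, p_j) = ν_k − Σ_{j=1}^k φ*( f(p_j) + ν_k ) + Σ_{j=1}^V d_φ(0, p_j) − k·φ(0). -/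
open Finset Set

/-- The convex conjugate of `φ` restricted to `[0,1]`:
`φ*(t) = sup_{y ∈ [0,1]} (t·y − φ(y))`. -/
noncomputable def restrictedConj (φ : ℝ → ℝ) (t : ℝ) : ℝ :=
  sSup ((fun y => t * y - φ y) '' Set.Icc 0 1)

/-!
On `[0,1]` a convex `φ` lies above its tangent at `x`, and the gap at `y` is `d_φ(y, x) ≥ 0`. Hence
the supremum defining `φ*` at the slope `φ'(x)` is attained at `x`. At a kept coordinate the slope
`φ'(q_j)` is `φ'(p_j) + ν`, so both `d_φ(q_j, p_j)` and `d_φ(0, p_j)` are measured by tangents at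
the same point `p_j`, and their difference is `ν q_j - φ*(φ'(p_j) + ν) - φ(0)`. Summing over the
kept coordinates turns `ν q_j` into `ν`, as `q` has total mass one.
-/

theorem breg_nonneg {φ φ' : ℝ → ℝ} {s : Set ℝ} {x y : ℝ} (hφ : ConvexOn ℝ s φ) (hx : x ∈ s)
    (hy : y ∈ s) (hderiv : HasDerivWithinAt φ (φ' x) s x) : 0 ≤ breg φ φ' y x := by
  unfold breg
  rcases lt_trichotomy x y with hxy | rfl | hyx
  · have hslope := hφ.le_slope_of_hasDerivWithinAt hx hy hxy hderiv
    rw [slope_def_field, le_div_iff₀ (sub_pos.2 hxy)] at hslope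
    linarith
  · simp
  · have hslope := hφ.slope_le_of_hasDerivWithinAt hy hx hyx hderiv
    rw [slope_def_field, div_le_iff₀ (sub_pos.2 hyx)] at hslope
    linarith

theorem isGreatest_image_deriv_mul_sub {φ : ℝ → ℝ} {s : Set ℝ} {x m : ℝ} (hφ : ConvexOn ℝ s φ)
    (hx : x ∈ s) (hderiv : HasDerivWithinAt φ m s x) :
    IsGreatest ((fun y => m * y - φ y) '' s) (m * x - φ x) := by
  refine ⟨mem_image_of_mem _ hx, forall_mem_image.2 fun y hy => ?_⟩
  have hgap : 0 ≤ φ y - φ x - m * (y - x) := breg_nonneg (φ' := fun _ => m) hφ hx hy hderiv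
  linarith

theorem restrictedConj_eq_of_hasDerivWithinAt {φ : ℝ → ℝ} {x m : ℝ}
    (hφ : ConvexOn ℝ (Icc 0 1) φ) (hx : x ∈ Icc (0 : ℝ) 1)
    (hderiv : HasDerivWithinAt φ m (Icc 0 1) x) : restrictedConj φ m = m * x - φ x :=
  (isGreatest_image_deriv_mul_sub hφ hx hderiv).csSup_eq

theorem breg_sub_breg (φ φ' : ℝ → ℝ) (x y z : ℝ) :
    breg φ φ' x z - breg φ φ' y z = φ x - φ y - φ' z * (x - y) := by
  unfold breg
  ring

theorem breg_sub_breg_zero_eq_restrictedConj {φ φ' : ℝ → ℝ} {x y ν : ℝ}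
    (hφ : ConvexOn ℝ (Icc 0 1) φ) (hx : x ∈ Icc (0 : ℝ) 1)
    (hderiv : HasDerivWithinAt φ (φ' x) (Icc 0 1) x) (hkkt : φ' x = φ' y + ν) :
    breg φ φ' x y - breg φ φ' 0 y = ν * x - restrictedConj φ (φ' y + ν) - φ 0 := by
  rw [breg_sub_breg, ← hkkt, restrictedConj_eq_of_hasDerivWithinAt hφ hx hderiv, hkkt]
  ring

theorem sum_embedding_add_sum_compl {ι κ M : Type*} [Fintype ι] [DecidableEq ι] [Fintype κ]
    [AddCommMonoid M] (e : κ ↪ ι) (g : ι → M) :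
    ∑ j, g (e j) + ∑ i ∈ (univ.map e)ᶜ, g i = ∑ i, g i := by
  rw [← sum_map univ e g, sum_add_sum_compl]

theorem compl_map_castLEEmb_univ {m n : ℕ} (h : m ≤ n) :
    (univ.map (Fin.castLEEmb h))ᶜ = univ.filter fun i : Fin n => m ≤ i := by
  have hrange (i : Fin n) : (∃ j, Fin.castLE h j = i) ↔ (i : ℕ) < m :=
    Set.ext_iff.1 (Fin.range_castLE h) i
  ext i
  simp [hrange]

theorem primal_cost_dual_representation_general {ι κ : Type*} [Fintype ι] [DecidableEq ι]
    [Fintype κ] (e : κ ↪ ι) (p : ι → ℝ) {φ φ' : ℝ → ℝ} (hφ : ConvexOn ℝ (Icc 0 1) φ)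
    (hderiv : ∀ x ∈ Icc (0 : ℝ) 1, HasDerivWithinAt φ (φ' x) (Icc 0 1) x)
    {ν : ℝ} {q : κ → ℝ} (hq : ∀ j, q j ∈ Icc (0 : ℝ) 1)
    (hkkt : ∀ j, φ' (q j) = φ' (p (e j)) + ν) :
    ∑ j, breg φ φ' (q j) (p (e j)) + ∑ i ∈ (univ.map e)ᶜ, breg φ φ' 0 (p i)
      = ν * ∑ j, q j - ∑ j, restrictedConj φ (φ' (p (e j)) + ν)
        + ∑ i, breg φ φ' 0 (p i) - Fintype.card κ * φ 0 := by
  have hkept : ∑ j, breg φ φ' (q j) (p (e j)) - ∑ j, breg φ φ' 0 (p (e j))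
      = ν * ∑ j, q j - ∑ j, restrictedConj φ (φ' (p (e j)) + ν) - Fintype.card κ * φ 0 := by
    calc _ = ∑ j, (breg φ φ' (q j) (p (e j)) - breg φ φ' 0 (p (e j))) :=
          (sum_sub_distrib _ _).symm
      _ = ∑ j, (ν * q j - restrictedConj φ (φ' (p (e j)) + ν) - φ 0) :=
          sum_congr rfl fun j _ =>
            breg_sub_breg_zero_eq_restrictedConj hφ (hq j) (hderiv _ (hq j)) (hkkt j)
      _ = _ := by simp [sum_sub_distrib, mul_sum]
  have hsplit := sum_embedding_add_sum_compl e fun i => breg φ φ' 0 (p i)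
  linarith

/-- Dual representation of the primal cost of keeping the first `k`
coordinates. For a primal valid `φ` with derivative `f = φ'`, `p ∈ Δ_V`, and
`ν_k ∈ ℝ`, `q ∈ Δ_k` satisfying the KKT equations `f(q_j) = f(p_j) + ν_k`,
`Σ_{j≤k} d_φ(q_j, p_j) + Σ_{j>k} d_φ(0, p_j)
 = ν_k − Σ_{j≤k} φ*(f(p_j) + ν_k) + Σ_{j=1}^V d_φ(0, p_j) − k·φ(0)`. -/
theorem primal_cost_dual_representation
    (V k : ℕ) (hk : 1 ≤ k) (hkV : k ≤ V)
    (p : Fin V → ℝ) (hp0 : ∀ i, p i ∈ Set.Icc (0:ℝ) 1) (hp1 : (∑ i, p i) = 1)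
    (φ φ' : ℝ → ℝ)
    (hconv : ConvexOn ℝ (Set.Icc 0 1) φ)
    (hderiv : ∀ x ∈ Set.Icc (0:ℝ) 1, HasDerivWithinAt φ (φ' x) (Set.Icc 0 1) x)
    (hcont : ContinuousOn φ' (Set.Icc 0 1))
    (hstrict : StrictConvexOn ℝ (Set.Ioo 0 1) φ)
    (νk : ℝ) (q : Fin k → ℝ) (hq : q ∈ probSimplex k)
    (hkkt : ∀ j : Fin k, φ' (q j) = φ' (p (Fin.castLE hkV j)) + νk) :
    (∑ j : Fin k, breg φ φ' (q j) (p (Fin.castLE hkV j)))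
      + (∑ j ∈ Finset.univ.filter (fun j : Fin V => k ≤ (j : ℕ)), breg φ φ' 0 (p j))
    = νk - (∑ j : Fin k, restrictedConj φ (φ' (p (Fin.castLE hkV j)) + νk))
      + (∑ j : Fin V, breg φ φ' 0 (p j)) - (k : ℝ) * φ 0 := by
  simpa [compl_map_castLEEmb_univ, hq.2] using
    primal_cost_dual_representation_general (Fin.castLEEmb hkV) p hconv hderiv hq.1 hkkt
end
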